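/- For each μ > 0 and integer k ≥ 1 there exists ε > 0 such that for all p ∈ (0,1): if 2 ≤ r ≤ k and V_1,…,V_r are pairwise disjoint vertex sets in an (ε,p,k−2,k−1)-pseudorandom graph G on n vertices with |V_i| ≥ μ p^{k−i} n for each i, then the number of copies of K_r with one vertex in each V_i is at least (1−μ) p^{r(r−1)/2} |V_1|·…·|V_r|. -/

import Mathlib

open scoped Classical

/-- Number of edges of `G` with one endpoint in `A` and the other in `B`. -/
noncomputable def eBetween {V : Type*} (G : SimpleGraph V) (A B : Finset V) : ℕ :=
  ((A ×ˢ B).filter fun e => G.Adj e.1 e.2).card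

/-- `G` is `(ε,p,k,ℓ)`-pseudorandom. -/
def Pseudorandom {V : Type*} [Fintype V] (G : SimpleGraph V) (ε p : ℝ) (k l : ℕ) : Prop :=
  ∀ X Y : Finset V, Disjoint X Y →
    ε * p ^ k * (Fintype.card V : ℝ) ≤ (X.card : ℝ) →
    ε * p ^ l * (Fintype.card V : ℝ) ≤ (Y.card : ℝ) →
    |(eBetween G X Y : ℝ) - p * X.card * Y.card| < ε * p * X.card * Y.card

/-- The number of copies of `K_r` with exactly one vertex in each `Vs i`. -/
noncomputable def crossCliqueCount {V : Type*} (G : SimpleGraph V) {r : ℕ}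
    (Vs : Fin r → Finset V) : ℕ :=
  Nat.card {f : Fin r → V // (∀ i, f i ∈ Vs i) ∧ ∀ i j, i ≠ j → G.Adj (f i) (f j)}

/-!
Crossing `K_{r+1}`s are counted by their vertex `v` in the first part: the remaining vertices form a
crossing `K_r` in the neighbourhoods of `v` in the later parts. Pseudorandomness makes all but a
proportion `r * (ε / c)` of the vertices `v` typical, meaning that they have at least
`(1 - ε) * p * |V_i|` neighbours in every later part `V_i`. Deleting the first part shifts the
exponent in the size condition `c * p ^ (k - i) * n ≤ |V_i|` by one, which pays exactly for the
factor `p` lost in passing to neighbourhoods, so for `ε ≤ 1 / 2` the condition survives with `c / 2`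
in place of `c` and induction applies. The relative losses add up to at most
`r.choose 2 * 2 ^ r * (ε / c)`.
-/

open scoped Finset

variable {V : Type*} {G : SimpleGraph V} {ε p c : ℝ} {k l r : ℕ}

/-- One-sided pseudorandomness: the lower half of the edge estimate in `Pseudorandom`, with a weak
inequality. -/
def LowerPseudorandom [Fintype V] (G : SimpleGraph V) (ε p : ℝ) (k l : ℕ) : Prop :=
  ∀ X Y : Finset V, Disjoint X Y →
    ε * p ^ k * (Fintype.card V : ℝ) ≤ #X → ε * p ^ l * (Fintype.card V : ℝ) ≤ #Y →
    (1 - ε) * p * #X * #Y ≤ eBetween G X Y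

theorem Pseudorandom.lowerPseudorandom [Fintype V] (hG : Pseudorandom G ε p k l) :
    LowerPseudorandom G ε p k l := fun X Y hXY hX hY => by
  linarith [(abs_lt.1 (hG X Y hXY hX hY)).1]

/-- `f` selects a clique of `G` with one vertex in each of the parts `Vs i`; these are the objects
counted by `crossCliqueCount`. -/
def IsCrossClique (G : SimpleGraph V) (Vs : Fin r → Finset V) (f : Fin r → V) : Prop :=
  (∀ i, f i ∈ Vs i) ∧ ∀ i j, i ≠ j → G.Adj (f i) (f j)

/-- The link of `v` in a family of parts: its neighbourhoods in all parts but the first, indexed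
from `0` again. -/
noncomputable def link (G : SimpleGraph V) (Vs : Fin (r + 1) → Finset V) (v : V) :
    Fin r → Finset V :=
  fun i => {w ∈ Vs i.succ | G.Adj v w}

theorem link_subset (Vs : Fin (r + 1) → Finset V) (v : V) (i : Fin r) :
    link G Vs v i ⊆ Vs i.succ :=
  Finset.filter_subset _ _

theorem pairwise_disjoint_link {Vs : Fin (r + 1) → Finset V}
    (hVs : Pairwise fun i j => Disjoint (Vs i) (Vs j)) (v : V) :
    Pairwise fun i j => Disjoint (link G Vs v i) (link G Vs v j) := fun i j hij =>
  (hVs ((Fin.succ_injective r).ne hij)).mono (link_subset Vs v i) (link_subset Vs v j)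

theorem isCrossClique_cons {Vs : Fin (r + 1) → Finset V} {v : V} {f : Fin r → V} :
    IsCrossClique G Vs (Fin.cons v f) ↔ v ∈ Vs 0 ∧ IsCrossClique G (link G Vs v) f := by
  simp only [IsCrossClique, link, Fin.forall_fin_succ, Fin.cons_zero, Fin.cons_succ,
    Finset.mem_filter, ne_eq, Fin.succ_inj, Fin.succ_ne_zero, (Fin.succ_ne_zero _).symm,
    G.adj_comm _ v, not_true_eq_false, not_false_eq_true, forall_const, false_imp_iff, true_and,
    forall_and]
  tauto

theorem crossCliqueCount_eq_sum_link [Finite V] (G : SimpleGraph V)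
    (Vs : Fin (r + 1) → Finset V) :
    crossCliqueCount G Vs = ∑ v ∈ Vs 0, crossCliqueCount G (link G Vs v) := by
  let cons (x : Σ v : Vs 0, {f // IsCrossClique G (link G Vs v) f}) : {f // IsCrossClique G Vs f} :=
    ⟨Fin.cons x.1.1 x.2.1, isCrossClique_cons.2 ⟨x.1.2, x.2.2⟩⟩
  have cons_bijective : Function.Bijective cons := by
    constructor
    · rintro ⟨⟨v, hv⟩, f, hf⟩ ⟨⟨w, hw⟩, g, hg⟩ h
      obtain ⟨rfl, rfl⟩ := Fin.cons_inj.1 (Subtype.mk.inj h)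
      rfl
    · rintro ⟨f, hf⟩
      rw [← Fin.cons_self_tail f, isCrossClique_cons] at hf
      exact ⟨⟨⟨f 0, hf.1⟩, Fin.tail f, hf.2⟩, Subtype.ext (Fin.cons_self_tail f)⟩
  rw [← Finset.sum_coe_sort]
  exact (Nat.card_eq_of_bijective cons cons_bijective).symm.trans Nat.card_sigma

theorem eBetween_eq_sum_card_filter_adj (G : SimpleGraph V) (X Y : Finset V) :
    eBetween G X Y = ∑ v ∈ Y, #{w ∈ X | G.Adj v w} := by
  simp only [eBetween, Finset.card_filter, Finset.sum_product_right, G.adj_comm]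

theorem LowerPseudorandom.card_low_degree_le [Fintype V] (hG : LowerPseudorandom G ε p k l)
    (hε : 0 ≤ ε) (hp : 0 ≤ p) {X Y : Finset V} (hXY : Disjoint X Y)
    (hX : ε * p ^ k * (Fintype.card V : ℝ) ≤ #X) :
    (#{v ∈ Y | (#{w ∈ X | G.Adj v w} : ℝ) < (1 - ε) * p * #X} : ℝ)
      ≤ ε * p ^ l * (Fintype.card V : ℝ) := by
  set low := {v ∈ Y | (#{w ∈ X | G.Adj v w} : ℝ) < (1 - ε) * p * #X}
  by_contra! hlow
  have low_nonempty : low.Nonempty := by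
    rw [← Finset.card_pos, ← Nat.cast_pos (α := ℝ)]
    exact hlow.trans_le' (by positivity)
  have many_edges : (1 - ε) * p * #X * #low ≤ eBetween G X low :=
    hG X low (hXY.mono_right (Finset.filter_subset _ _)) hX hlow.le
  have few_edges : (eBetween G X low : ℝ) < #low * ((1 - ε) * p * #X) := by
    rw [eBetween_eq_sum_card_filter_adj, Nat.cast_sum, ← nsmul_eq_mul, ← Finset.sum_const]
    exact Finset.sum_lt_sum_of_nonempty low_nonempty fun v hv => (Finset.mem_filter.1 hv).2
  linarith

/-- The vertices of the first part with at least `(1 - ε) * p * |V_i|` neighbours in each later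
part `V_i`, i.e. those to whose links the induction applies. -/
noncomputable def typicalVertices (G : SimpleGraph V) (ε p : ℝ) (Vs : Fin (r + 1) → Finset V) :
    Finset V :=
  {v ∈ Vs 0 | ∀ i, (1 - ε) * p * #(Vs i.succ) ≤ #(link G Vs v i)}

theorem mul_card_le_card_link {Vs : Fin (r + 1) → Finset V} {v : V}
    (hv : v ∈ typicalVertices G ε p Vs) (i : Fin r) :
    (1 - ε) * p * #(Vs i.succ) ≤ #(link G Vs v i) :=
  (Finset.mem_filter.1 hv).2 i

theorem half_mul_le_card_link [Fintype V] (hε : ε ≤ 1 / 2) (hp : 0 ≤ p) (hc : 0 ≤ c)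
    (hr : r < k) {Vs : Fin (r + 1) → Finset V}
    (hVs : ∀ i, c * p ^ (k - 1 - i.val) * (Fintype.card V : ℝ) ≤ #(Vs i))
    {v : V} (hv : v ∈ typicalVertices G ε p Vs) (i : Fin r) :
    c / 2 * p ^ (k - 1 - i.val) * (Fintype.card V : ℝ) ≤ #(link G Vs v i) := by
  have exponent_shift : k - 1 - i.val = k - 1 - i.succ.val + 1 := by
    rw [Fin.val_succ]; omega
  calc c / 2 * p ^ (k - 1 - i.val) * (Fintype.card V : ℝ)
      = 1 / 2 * p * (c * p ^ (k - 1 - i.succ.val) * Fintype.card V) := by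
        rw [exponent_shift, pow_succ]; ring
    _ ≤ (1 - ε) * p * #(Vs i.succ) := by
        have hεp : 1 / 2 * p ≤ (1 - ε) * p := mul_le_mul_of_nonneg_right (by linarith) hp
        exact mul_le_mul hεp (hVs i.succ) (by positivity) (hεp.trans' (by positivity))
    _ ≤ #(link G Vs v i) := mul_card_le_card_link hv i

theorem LowerPseudorandom.card_small_link_le [Fintype V]
    (hG : LowerPseudorandom G ε p (k - 2) (k - 1)) (hε : 0 ≤ ε) (hp : 0 ≤ p) (hp1 : p ≤ 1)
    (hc : 0 < c) {Vs : Fin (r + 1) → Finset V} (hd : Pairwise fun i j => Disjoint (Vs i) (Vs j))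
    (hVs : ∀ i, c * p ^ (k - 1 - i.val) * (Fintype.card V : ℝ) ≤ #(Vs i)) (i : Fin r) :
    (#{v ∈ Vs 0 | (#(link G Vs v i) : ℝ) < (1 - ε) * p * #(Vs i.succ)} : ℝ)
      ≤ ε / c * #(Vs 0) := by
  rcases le_total c ε with hcε | hεc
  · calc (#{v ∈ Vs 0 | (#(link G Vs v i) : ℝ) < (1 - ε) * p * #(Vs i.succ)} : ℝ)
        ≤ #(Vs 0) := by gcongr; exact Finset.filter_subset _ _
      _ ≤ ε / c * #(Vs 0) :=
        le_mul_of_one_le_left (Nat.cast_nonneg _) ((one_le_div hc).2 hcε)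
  · have exponent_le : k - 1 - i.succ.val ≤ k - 2 := by
      rw [Fin.val_succ]; omega
    have part_large : ε * p ^ (k - 2) * (Fintype.card V : ℝ) ≤ #(Vs i.succ) :=
      calc ε * p ^ (k - 2) * (Fintype.card V : ℝ)
          ≤ c * p ^ (k - 1 - i.succ.val) * Fintype.card V := by
            gcongr ?_ * ?_ * _
            exact pow_le_pow_of_le_one hp hp1 exponent_le
        _ ≤ #(Vs i.succ) := hVs i.succ
    calc (#{v ∈ Vs 0 | (#(link G Vs v i) : ℝ) < (1 - ε) * p * #(Vs i.succ)} : ℝ)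
        ≤ ε * p ^ (k - 1) * Fintype.card V :=
          hG.card_low_degree_le hε hp (hd (Fin.succ_ne_zero i)) part_large
      _ = ε / c * (c * p ^ (k - 1) * Fintype.card V) := by field_simp
      _ ≤ ε / c * #(Vs 0) := by
          gcongr
          exact hVs 0

theorem LowerPseudorandom.le_card_typicalVertices [Fintype V]
    (hG : LowerPseudorandom G ε p (k - 2) (k - 1)) (hε : 0 ≤ ε) (hp : 0 ≤ p) (hp1 : p ≤ 1)
    (hc : 0 < c) {Vs : Fin (r + 1) → Finset V} (hd : Pairwise fun i j => Disjoint (Vs i) (Vs j))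
    (hVs : ∀ i, c * p ^ (k - 1 - i.val) * (Fintype.card V : ℝ) ≤ #(Vs i)) :
    (1 - r * (ε / c)) * #(Vs 0) ≤ #(typicalVertices G ε p Vs) := by
  let atypical (i : Fin r) : Finset V :=
    {v ∈ Vs 0 | (#(link G Vs v i) : ℝ) < (1 - ε) * p * #(Vs i.succ)}
  have cover : Vs 0 ⊆ typicalVertices G ε p Vs ∪ Finset.univ.biUnion atypical := by
    intro v hv
    by_cases h : ∀ i, (1 - ε) * p * #(Vs i.succ) ≤ #(link G Vs v i)
    · exact Finset.mem_union_left _ (Finset.mem_filter.2 ⟨hv, h⟩)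
    · obtain ⟨i, hi⟩ := not_forall.1 h
      exact Finset.mem_union_right _ <| Finset.mem_biUnion.2
        ⟨i, Finset.mem_univ i, Finset.mem_filter.2 ⟨hv, not_le.1 hi⟩⟩
  have card_le : (#(Vs 0) : ℝ) ≤ #(typicalVertices G ε p Vs) + r * (ε / c * #(Vs 0)) :=
    calc (#(Vs 0) : ℝ) ≤ #(typicalVertices G ε p Vs) + ∑ i, (#(atypical i) : ℝ) := by
          exact_mod_cast (Finset.card_le_card cover).trans <| (Finset.card_union_le _ _).trans <|
            Nat.add_le_add_left Finset.card_biUnion_le _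
      _ ≤ #(typicalVertices G ε p Vs) + ∑ _i : Fin r, ε / c * #(Vs 0) := by
          gcongr with i
          exact hG.card_small_link_le hε hp hp1 hc hd hVs i
      _ = #(typicalVertices G ε p Vs) + r * (ε / c * #(Vs 0)) := by
          rw [Finset.sum_const, Finset.card_fin, nsmul_eq_mul]
  linarith

theorem card_typicalVertices_mul_le_crossCliqueCount [Finite V] (hε : ε ≤ 1) (hp : 0 ≤ p)
    {Vs : Fin (r + 1) → Finset V} {A : ℝ} (hA : 0 ≤ A)
    (hlink : ∀ v ∈ typicalVertices G ε p Vs,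
      A * ∏ i, (#(link G Vs v i) : ℝ) ≤ crossCliqueCount G (link G Vs v)) :
    #(typicalVertices G ε p Vs) * (A * (((1 - ε) * p) ^ r * ∏ i : Fin r, (#(Vs i.succ) : ℝ)))
      ≤ crossCliqueCount G Vs := by
  have hεp : 0 ≤ (1 - ε) * p := mul_nonneg (sub_nonneg.2 hε) hp
  have prod_le (v : V) (hv : v ∈ typicalVertices G ε p Vs) :
      ((1 - ε) * p) ^ r * ∏ i : Fin r, (#(Vs i.succ) : ℝ) ≤ ∏ i, (#(link G Vs v i) : ℝ) :=
    calc ((1 - ε) * p) ^ r * ∏ i : Fin r, (#(Vs i.succ) : ℝ)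
        = ∏ i : Fin r, (1 - ε) * p * (#(Vs i.succ) : ℝ) := by
          rw [Finset.prod_mul_distrib, Fin.prod_const]
      _ ≤ ∏ i, (#(link G Vs v i) : ℝ) :=
          Finset.prod_le_prod (fun i _ => mul_nonneg hεp (Nat.cast_nonneg _))
            fun i _ => mul_card_le_card_link hv i
  calc #(typicalVertices G ε p Vs) * (A * (((1 - ε) * p) ^ r * ∏ i : Fin r, (#(Vs i.succ) : ℝ)))
      ≤ ∑ v ∈ typicalVertices G ε p Vs, (crossCliqueCount G (link G Vs v) : ℝ) := by
        rw [← nsmul_eq_mul]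
        exact Finset.card_nsmul_le_sum _ _ _ fun v hv =>
          (mul_le_mul_of_nonneg_left (prod_le v hv) hA).trans (hlink v hv)
    _ ≤ ∑ v ∈ Vs 0, (crossCliqueCount G (link G Vs v) : ℝ) :=
        Finset.sum_le_sum_of_subset_of_nonneg (Finset.filter_subset _ _)
          fun v _ _ => Nat.cast_nonneg _
    _ = crossCliqueCount G Vs := by rw [crossCliqueCount_eq_sum_link, Nat.cast_sum]

theorem LowerPseudorandom.mul_prod_card_le_crossCliqueCount [Fintype V]
    (hG : LowerPseudorandom G ε p (k - 2) (k - 1)) (hε : 0 ≤ ε) (hε1 : ε ≤ 1) (hp : 0 ≤ p)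
    (hp1 : p ≤ 1) (hc : 0 < c) {Vs : Fin (r + 1) → Finset V}
    (hd : Pairwise fun i j => Disjoint (Vs i) (Vs j))
    (hVs : ∀ i, c * p ^ (k - 1 - i.val) * (Fintype.card V : ℝ) ≤ #(Vs i)) {A : ℝ} (hA : 0 ≤ A)
    (hlink : ∀ v ∈ typicalVertices G ε p Vs,
      A * ∏ i, (#(link G Vs v i) : ℝ) ≤ crossCliqueCount G (link G Vs v)) :
    (1 - r * (ε / c)) * (A * ((1 - ε) * p) ^ r) * ∏ i, (#(Vs i) : ℝ) ≤ crossCliqueCount G Vs := by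
  have hεp : 0 ≤ (1 - ε) * p := mul_nonneg (sub_nonneg.2 hε1) hp
  calc (1 - r * (ε / c)) * (A * ((1 - ε) * p) ^ r) * ∏ i, (#(Vs i) : ℝ)
      = (1 - r * (ε / c)) * #(Vs 0) *
          (A * (((1 - ε) * p) ^ r * ∏ i : Fin r, (#(Vs i.succ) : ℝ))) := by
        rw [Fin.prod_univ_succ]; ring
    _ ≤ #(typicalVertices G ε p Vs) *
          (A * (((1 - ε) * p) ^ r * ∏ i : Fin r, (#(Vs i.succ) : ℝ))) := by
        refine mul_le_mul_of_nonneg_right (hG.le_card_typicalVertices hε hp hp1 hc hd hVs) ?_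
        exact mul_nonneg hA (mul_nonneg (pow_nonneg hεp r) (by positivity))
    _ ≤ crossCliqueCount G Vs := card_typicalVertices_mul_le_crossCliqueCount hε1 hp hA hlink

theorem choose_two_succ (r : ℕ) : (r + 1).choose 2 = r + r.choose 2 := by
  rw [Nat.choose_succ_succ' r 1, Nat.choose_one_right]

theorem one_sub_choose_two_mul_le {x : ℝ} (hε : ε ≤ 1) (hx : 0 ≤ x) (hεx : ε ≤ x)
    (hloss : (r + 1).choose 2 * 2 ^ (r + 1) * x ≤ 1) :
    1 - (r + 1).choose 2 * 2 ^ (r + 1) * x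
      ≤ (1 - r * x) * ((1 - r.choose 2 * 2 ^ (r + 1) * x) * (1 - ε) ^ r) := by
  set L : ℝ := r.choose 2 * 2 ^ (r + 1) * x
  have loss_succ : 2 * (r * x) + L ≤ (r + 1).choose 2 * 2 ^ (r + 1) * x :=
    calc 2 * (r * x) + L ≤ 2 ^ (r + 1) * (r * x) + L := by
          gcongr
          exact le_self_pow₀ one_le_two r.succ_ne_zero
      _ = (r + 1).choose 2 * 2 ^ (r + 1) * x := by
          rw [choose_two_succ]; push_cast; ring
  have hL : 0 ≤ L := by positivity
  have hrx : 0 ≤ r * x := by positivity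
  have hL1 : 0 ≤ 1 - L := by linarith
  have bernoulli : 1 - r * x ≤ (1 - ε) ^ r :=
    calc 1 - r * x ≤ 1 + r * (-ε) := by
          rw [mul_neg, ← sub_eq_add_neg]; gcongr
      _ ≤ (1 + -ε) ^ r := one_add_mul_le_pow (by linarith) r
      _ = (1 - ε) ^ r := by rw [← sub_eq_add_neg]
  calc 1 - (r + 1).choose 2 * 2 ^ (r + 1) * x ≤ 1 - (2 * (r * x) + L) := by gcongr
    _ ≤ (1 - r * x) * ((1 - L) * (1 - r * x)) := by
        linarith [mul_nonneg (sq_nonneg (r * x)) hL1, mul_nonneg hrx hL]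
    _ ≤ (1 - r * x) * ((1 - L) * (1 - ε) ^ r) := by
        gcongr
        linarith

theorem LowerPseudorandom.le_crossCliqueCount [Fintype V]
    (hG : LowerPseudorandom G ε p (k - 2) (k - 1)) (hε : 0 ≤ ε) (hε2 : ε ≤ 1 / 2) (hp : 0 ≤ p)
    (hp1 : p ≤ 1) (hc : 0 < c) (hc1 : c ≤ 1) (hr : r ≤ k) {Vs : Fin r → Finset V}
    (hd : Pairwise fun i j => Disjoint (Vs i) (Vs j))
    (hVs : ∀ i, c * p ^ (k - 1 - i.val) * (Fintype.card V : ℝ) ≤ #(Vs i)) :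
    (1 - r.choose 2 * 2 ^ r * (ε / c)) * p ^ r.choose 2 * ∏ i, (#(Vs i) : ℝ)
      ≤ crossCliqueCount G Vs := by
  induction r generalizing c with
  | zero => simp [crossCliqueCount]
  | succ r ih =>
    rcases le_total 1 ((r + 1).choose 2 * 2 ^ (r + 1) * (ε / c)) with hloss | hloss
    · refine le_trans ?_ (Nat.cast_nonneg _)
      rw [mul_assoc]
      exact mul_nonpos_of_nonpos_of_nonneg (sub_nonpos.2 hloss) (by positivity)
    set L : ℝ := r.choose 2 * 2 ^ (r + 1) * (ε / c) with hL
    have hL1 : 0 ≤ 1 - L := by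
      refine sub_nonneg.2 (hloss.trans' ?_)
      rw [hL, choose_two_succ]
      gcongr
      exact Nat.le_add_left _ _
    have loss_link : L = r.choose 2 * 2 ^ r * (ε / (c / 2)) := by
      rw [hL, pow_succ]; field_simp
    have count_link (v : V) (hv : v ∈ typicalVertices G ε p Vs) :
        (1 - L) * p ^ r.choose 2 * ∏ i, (#(link G Vs v i) : ℝ)
          ≤ crossCliqueCount G (link G Vs v) := by
      rw [loss_link]
      exact ih (half_pos hc) (by linarith) (by omega) (pairwise_disjoint_link hd v)
        (half_mul_le_card_link hε2 hp hc.le hr hVs hv)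
    have loss_step :=
      one_sub_choose_two_mul_le (by linarith) (by positivity) (le_div_self hε hc hc1) hloss
    calc (1 - (r + 1).choose 2 * 2 ^ (r + 1) * (ε / c)) * p ^ (r + 1).choose 2 *
          ∏ i, (#(Vs i) : ℝ)
        ≤ (1 - r * (ε / c)) * ((1 - L) * (1 - ε) ^ r) * p ^ (r + 1).choose 2 *
          ∏ i, (#(Vs i) : ℝ) :=
          mul_le_mul_of_nonneg_right (mul_le_mul_of_nonneg_right loss_step (pow_nonneg hp _))
            (Finset.prod_nonneg fun _ _ => Nat.cast_nonneg _)
      _ = (1 - r * (ε / c)) * ((1 - L) * p ^ r.choose 2 * ((1 - ε) * p) ^ r) *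
          ∏ i, (#(Vs i) : ℝ) := by
          rw [choose_two_succ, pow_add, mul_pow]; ring
      _ ≤ crossCliqueCount G Vs :=
          hG.mul_prod_card_le_crossCliqueCount hε (by linarith) hp hp1 hc hd hVs
            (mul_nonneg hL1 (pow_nonneg hp _)) count_link

theorem choose_two_mul_two_pow_le (hr : r ≤ k) : r.choose 2 * 2 ^ r ≤ 4 ^ k :=
  calc r.choose 2 * 2 ^ r ≤ 2 ^ r * 2 ^ r := by gcongr; exact Nat.choose_le_two_pow r 2
    _ = 4 ^ r := by rw [← mul_pow]; norm_num
    _ ≤ 4 ^ k := by gcongr; norm_num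

theorem stmt6_general (μ : ℝ) (hμ : 0 < μ) (k : ℕ) :
    ∃ ε : ℝ, 0 < ε ∧
      ∀ (p : ℝ), 0 ≤ p → p ≤ 1 →
        ∀ (V : Type*) [Fintype V] (G : SimpleGraph V),
          LowerPseudorandom G ε p (k - 2) (k - 1) →
          ∀ r ≤ k, ∀ Vs : Fin r → Finset V,
            (Pairwise fun i j => Disjoint (Vs i) (Vs j)) →
            (∀ i, μ * p ^ (k - 1 - i.val) * (Fintype.card V : ℝ) ≤ #(Vs i)) →
            (1 - μ) * p ^ r.choose 2 * ∏ i, (#(Vs i) : ℝ) ≤ crossCliqueCount G Vs := by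
  obtain ⟨c, hc, hcμ, hc2⟩ : ∃ c : ℝ, 0 < c ∧ c ≤ μ ∧ c ≤ 1 / 2 :=
    ⟨min μ (1 / 2), by positivity, min_le_left _ _, min_le_right _ _⟩
  have hε2 : c ^ 2 / 4 ^ k ≤ 1 / 2 :=
    calc c ^ 2 / 4 ^ k ≤ c ^ 2 := div_le_self (by positivity) (one_le_pow₀ (by norm_num))
      _ ≤ c := pow_le_of_le_one hc.le (by linarith) two_ne_zero
      _ ≤ 1 / 2 := hc2
  refine ⟨c ^ 2 / 4 ^ k, by positivity, fun p hp hp1 V _ G hG r hr Vs hd hVs => ?_⟩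
  have loss_le : r.choose 2 * 2 ^ r * (c ^ 2 / 4 ^ k / c) ≤ μ :=
    calc r.choose 2 * 2 ^ r * (c ^ 2 / 4 ^ k / c) ≤ 4 ^ k * (c ^ 2 / 4 ^ k / c) := by
          gcongr
          exact_mod_cast choose_two_mul_two_pow_le hr
      _ = c := by field_simp
      _ ≤ μ := hcμ
  calc (1 - μ) * p ^ r.choose 2 * ∏ i, (#(Vs i) : ℝ)
      ≤ (1 - r.choose 2 * 2 ^ r * (c ^ 2 / 4 ^ k / c)) * p ^ r.choose 2 * ∏ i, (#(Vs i) : ℝ) := by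
        gcongr
    _ ≤ crossCliqueCount G Vs :=
        hG.le_crossCliqueCount (by positivity) hε2 hp hp1 hc (by linarith) hr hd
          fun i => (hVs i).trans' (by gcongr)

/-- lower bound on crossing cliques under weaker pseudorandomness. -/
theorem stmt6 (μ : ℝ) (hμ : 0 < μ) (k : ℕ) (hk : 1 ≤ k) :
    ∃ ε : ℝ, 0 < ε ∧
      ∀ (p : ℝ), 0 < p → p < 1 →
        ∀ (V : Type) [Fintype V] (G : SimpleGraph V),
          Pseudorandom G ε p (k - 2) (k - 1) →
          ∀ (r : ℕ), 2 ≤ r → r ≤ k →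
            ∀ Vs : Fin r → Finset V,
              (∀ i j, i ≠ j → Disjoint (Vs i) (Vs j)) →
              (∀ i : Fin r, μ * p ^ (k - 1 - i.val) * (Fintype.card V : ℝ) ≤ ((Vs i).card : ℝ)) →
              (1 - μ) * p ^ (r.choose 2) * ∏ i, ((Vs i).card : ℝ) ≤ (crossCliqueCount G Vs : ℝ) := by
  obtain ⟨ε, hε, h⟩ := stmt6_general μ hμ k
  exact ⟨ε, hε, fun p hp hp1 V _ G hG r _ hr Vs hd =>
    h p hp.le hp1.le V G hG.lowerPseudorandom r hr Vs fun i j => hd i j⟩
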